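/- Consider the uncertain system ẋ = Ax + B₁w + B₂u, z = C₁x, w = Δ(s)z, with A ∈ ℝ^{n×n}, B₁ ∈ ℝ^{n×m}, B₂ ∈ ℝ^{n×p}, C₁ ∈ ℝ^{m×n}. Suppose there exist a real symmetric matrix Y ≻ 0, a real matrix M ∈ ℝ^{p×n}, and a scalar ε > 0 such that: (a) the block matrix [[AY + YAᵀ + B₂M + MᵀB₂ᵀ + εI, B₁ + AYC₁ᵀ + B₂MC₁ᵀ], [B₁ᵀ + C₁YAᵀ + C₁MᵀB₂ᵀ, 0]] ⪯ 0, and (b) C₁YC₁ᵀ − I ≺ 0. Let K = MY⁻¹. Then for every uncertainty Δ given by a minimal realization (A_Δ, B_Δ, C_Δ, D_Δ) that is strictly negative imaginary with every eigenvalue of Δ(0) = D_Δ − C_ΔA_Δ⁻¹B_Δ lying in [−1, 1] and D_Δ ⪰ 0, the closed-loop state matrix [[A + B₂K + B₁D_ΔC₁, B₁C_Δ], [B_ΔC₁, A_Δ]] is Hurwitz; i.e., the state-feedback law u = Kx robustly stabilizes the uncertain system. -/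

import Mathlib

open Matrix Filter Topology ComplexOrder

/-- The (complex) eigenvalues of a real square matrix. -/
noncomputable def eigs {k : Type*} [Fintype k] [DecidableEq k] (A : Matrix k k ℝ) : Set ℂ :=
  spectrum ℂ (A.map Complex.ofReal)

/-- A real square matrix is Hurwitz if all of its (complex) eigenvalues have negative real
part. -/
noncomputable def IsHurwitz {k : Type*} [Fintype k] [DecidableEq k] (A : Matrix k k ℝ) : Prop :=
  ∀ μ ∈ eigs A, μ.re < 0

/-- Transfer function `R(s) = C (sI - A)⁻¹ B + D` of a real state-space system, as a
complex matrix. -/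
noncomputable def tf {n m : ℕ} (A : Matrix (Fin n) (Fin n) ℝ) (B : Matrix (Fin n) (Fin m) ℝ)
    (C : Matrix (Fin m) (Fin n) ℝ) (D : Matrix (Fin m) (Fin m) ℝ) (s : ℂ) :
    Matrix (Fin m) (Fin m) ℂ :=
  C.map (Complex.ofReal) * (s • (1 : Matrix (Fin n) (Fin n) ℂ) - A.map Complex.ofReal)⁻¹ *
      B.map Complex.ofReal + D.map Complex.ofReal

/-- A state-space realization `(A,B,C,D)` is minimal if the controllability matrix and the
observability matrix both have rank `n`. -/
def IsMinimal {n m : ℕ} (A : Matrix (Fin n) (Fin n) ℝ) (B : Matrix (Fin n) (Fin m) ℝ)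
    (C : Matrix (Fin m) (Fin n) ℝ) : Prop :=
  (Matrix.of fun (i : Fin n) (p : Fin n × Fin m) => (A ^ (p.1 : ℕ) * B) i p.2).rank = n ∧
  (Matrix.of fun (p : Fin n × Fin m) (i : Fin n) => (C * A ^ (p.1 : ℕ)) p.2 i).rank = n

/-- The system `(A,B,C,D)` is negative imaginary (NI). -/
noncomputable def IsNI {n m : ℕ} (A : Matrix (Fin n) (Fin n) ℝ) (B : Matrix (Fin n) (Fin m) ℝ)
    (C : Matrix (Fin m) (Fin n) ℝ) (D : Matrix (Fin m) (Fin m) ℝ) : Prop :=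
  (∀ μ ∈ eigs A, μ ≠ 0 ∧ μ.re ≤ 0) ∧
  (∀ ω : ℝ, 0 < ω → (Complex.I * ω) ∉ eigs A →
    (Complex.I • (tf A B C D (Complex.I * ω) - (tf A B C D (Complex.I * ω))ᴴ)).PosSemidef) ∧
  (∀ ω : ℝ, 0 < ω → (Complex.I * ω) ∈ eigs A →
    ∃ K : Matrix (Fin m) (Fin m) ℂ,
      Tendsto (fun s : ℂ => (s - Complex.I * ω) • Complex.I • tf A B C D s)
        (𝓝[≠] (Complex.I * ω)) (𝓝 K) ∧ K.PosSemidef)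

/-- The system `(A,B,C,D)` is strictly negative imaginary (SNI). -/
noncomputable def IsSNI {n m : ℕ} (A : Matrix (Fin n) (Fin n) ℝ) (B : Matrix (Fin n) (Fin m) ℝ)
    (C : Matrix (Fin m) (Fin n) ℝ) (D : Matrix (Fin m) (Fin m) ℝ) : Prop :=
  IsHurwitz A ∧
  (∀ ω : ℝ, 0 < ω →
    (Complex.I • (tf A B C D (Complex.I * ω) - (tf A B C D (Complex.I * ω))ᴴ)).PosDef)


section PL
attribute [local instance] Matrix.linftyOpNormedRing Matrix.linftyOpNormedAlgebra

lemma pr_half_plane {q : ℕ} (A : Matrix (Fin q) (Fin q) ℂ) (hA : ∀ μ ∈ spectrum ℂ A, μ.re < 0)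
    (a b : Fin q → ℂ)
    (him : ∀ ω : ℝ, ω ≠ 0 → 0 ≤ (a ⬝ᵥ (resolvent A (ω * Complex.I) *ᵥ b)).re) :
    ∀ s : ℂ, 0 ≤ s.re → 0 ≤ (a ⬝ᵥ (resolvent A s *ᵥ b)).re := by
  have hres : ∀ s : ℂ, 0 ≤ s.re → s ∈ resolventSet ℂ A := by
    intro s hs
    by_contra h
    exact absurd (hA s h) (not_lt.mpr hs)
  let L : Matrix (Fin q) (Fin q) ℂ →ₗ[ℂ] ℂ :=
    { toFun := fun X => a ⬝ᵥ (X *ᵥ b)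
      map_add' := by intro X Z; simp [Matrix.add_mulVec, dotProduct_add]
      map_smul' := by intro c X; simp [Matrix.smul_mulVec, dotProduct_smul] }
  have hLc : Continuous L := L.continuous_of_finiteDimensional
  let L' : Matrix (Fin q) (Fin q) ℂ →L[ℂ] ℂ := ⟨L, hLc⟩
  have hd : ∀ s : ℂ, 0 ≤ s.re → DifferentiableAt ℂ (fun s => L (resolvent A s)) s := by
    intro s hs
    have h1 := (spectrum.hasDerivAt_resolvent_const_left (hres s hs)).differentiableAt
    exact L'.differentiableAt.comp s h1
  have hcb : Tendsto (fun s => L (resolvent A s)) (Bornology.cobounded ℂ) (𝓝 0) := by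
    have := (hLc.tendsto 0).comp (spectrum.resolvent_tendsto_cobounded A (𝕜 := ℂ))
    simpa [Function.comp_def] using this
  have hf0 : Tendsto (fun s => Complex.exp (-L (resolvent A s))) (Bornology.cobounded ℂ) (𝓝 1) := by
    have := (Complex.continuous_exp.tendsto _).comp hcb.neg
    simpa [Function.comp_def] using this
  have him0 : ∀ ω : ℝ, 0 ≤ (L (resolvent A (ω * Complex.I))).re := by
    intro ω
    by_cases h : ω = 0
    · subst h
      have hc : ContinuousAt (fun ω : ℝ => (L (resolvent A (ω * Complex.I))).re) 0 := by
        have h1 : ContinuousAt (fun s => L (resolvent A s)) (((0:ℝ):ℂ) * Complex.I) :=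
          (hd _ (by simp)).continuousAt
        have h2 : ContinuousAt (fun ω : ℝ => (ω : ℂ) * Complex.I) 0 := by fun_prop
        exact Complex.continuous_re.continuousAt.comp (ContinuousAt.comp (f := fun ω : ℝ => (ω : ℂ) * Complex.I) h1 h2)
      refine ge_of_tendsto (hc.tendsto.mono_left (nhdsWithin_le_nhds (s := {0}ᶜ))) ?_
      filter_upwards [self_mem_nhdsWithin] with ω hω
      exact him ω hω
    · exact him ω h
  intro s hs
  have key : ‖Complex.exp (-L (resolvent A s))‖ ≤ 1 := by
    refine PhragmenLindelof.right_half_plane_of_bounded_on_real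
      (f := fun s => Complex.exp (-L (resolvent A s))) ?_ ?_ ?_ ?_ hs
    · apply DifferentiableOn.diffContOnCl
      rw [Complex.closure_setOfPred_lt_re]
      intro s hs
      exact (hd s hs).neg.cexp.differentiableWithinAt
    · refine ⟨1, by norm_num, 0, ?_⟩
      have := (hf0.isBigO_one ℝ).mono (inf_le_left : Bornology.cobounded ℂ ⊓ 𝓟 {z : ℂ | 0 < z.re} ≤ _)
      simpa using this
    · have h1 : Tendsto (fun x : ℝ => (x : ℂ)) atTop (Bornology.cobounded ℂ) := 
        RCLike.tendsto_ofReal_atTop_cobounded ℂ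
      exact ((hf0.comp h1).norm).isBoundedUnder_le
    · intro x
      simp only [Complex.norm_exp]
      simpa using him0 x
  rw [Complex.norm_exp] at key
  have : 0 ≤ (L (resolvent A s)).re := by simpa using key
  exact this

lemma cont_res {q : ℕ} (A : Matrix (Fin q) (Fin q) ℂ) (a b : Fin q → ℂ) (s : ℂ)
    (hs : s ∈ resolventSet ℂ A) :
    ContinuousAt (fun s => a ⬝ᵥ (resolvent A s *ᵥ b)) s := by
  have h1 := (spectrum.hasDerivAt_resolvent_const_left hs).continuousAt
  have h2 : Continuous (fun X : Matrix (Fin q) (Fin q) ℂ => a ⬝ᵥ (X *ᵥ b)) := by fun_prop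
  exact h2.continuousAt.comp h1
end PL

section PSD
open scoped MatrixOrder Matrix.Norms.L2Operator
lemma map_psd {k : Type*} [Fintype k] [DecidableEq k] {M : Matrix k k ℝ} (h : M.PosSemidef) :
    (M.map Complex.ofReal).PosSemidef := by
  obtain ⟨B, rfl⟩ := CStarAlgebra.nonneg_iff_eq_star_mul_self.mp h.nonneg
  have h1 : (star B * B).map Complex.ofReal
      = (B.map Complex.ofReal)ᴴ * B.map Complex.ofReal := by
    ext i j
    simp [Matrix.mul_apply]
  rw [h1]
  exact posSemidef_conjTranspose_mul_self _
end PSD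

lemma map_pd {k : Type*} [Fintype k] [DecidableEq k] {M : Matrix k k ℝ} (h : M.PosDef) :
    (M.map Complex.ofReal).PosDef := by
  rw [(map_psd h.posSemidef).posDef_iff_det_ne_zero]
  have h1 : (M.map Complex.ofReal).det = Complex.ofReal M.det :=
    (RingHom.map_det Complex.ofRealHom M).symm
  rw [h1]
  exact_mod_cast h.det_pos.ne'

lemma core {n m : ℕ} (F Y : Matrix (Fin n) (Fin n) ℂ) (C : Matrix (Fin m) (Fin n) ℂ) (ε : ℝ)
    (hε : 0 < ε) (hY : Y.PosDef)
    (hL : (-(F * Y + (F * Y)ᴴ + (ε : ℂ) • (1 : Matrix (Fin n) (Fin n) ℂ))).PosSemidef)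
    (hC : (1 - C * Y * Cᴴ).PosDef) (s : ℂ) (hs : 0 ≤ s.re) (x : Fin n → ℂ) (w : Fin m → ℂ)
    (hx : s • x = F *ᵥ x - (F * Y * Cᴴ) *ᵥ w)
    (hw : (star s * (star (C *ᵥ x) ⬝ᵥ w)).re ≤ s.re * (star (C *ᵥ x) ⬝ᵥ (C *ᵥ x)).re)
    (hw0 : (s = 0 → (star (C *ᵥ x) ⬝ᵥ w).re ≤ (star (C *ᵥ x) ⬝ᵥ (C *ᵥ x)).re))
    (hz : C *ᵥ x = 0 → w = 0) : x = 0 := by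
  obtain ⟨y, rfl⟩ : ∃ y, x = Y *ᵥ y := by
    refine ⟨Y⁻¹ *ᵥ x, ?_⟩
    rw [mulVec_mulVec, Matrix.mul_nonsing_inv _ ((Matrix.isUnit_iff_isUnit_det _).1 hY.isUnit), one_mulVec]
  set z := C *ᵥ (Y *ᵥ y) with hzdef
  set ζ := y - Cᴴ *ᵥ w with hζ
  have hYh : Yᴴ = Y := hY.isHermitian
  have e1 : s • (Y *ᵥ y) = (F * Y) *ᵥ ζ := by
    rw [hx, hζ, mulVec_sub, mulVec_mulVec, mulVec_mulVec]
  -- Cᴴ adjoint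
  have adj : ∀ (u : Fin m → ℂ) (v : Fin n → ℂ), star (Cᴴ *ᵥ u) ⬝ᵥ v = star u ⬝ᵥ (C *ᵥ v) := by
    intro u v
    rw [star_mulVec, conjTranspose_conjTranspose, ← dotProduct_mulVec]
  have cs : ∀ (k : ℕ) (u v : Fin k → ℂ), star u ⬝ᵥ v = star (star v ⬝ᵥ u) := by
    intro k u v
    rw [← star_dotProduct_star, star_star, dotProduct_comm]
  have h1 := hL.dotProduct_mulVec_nonneg ζ
  have hg : star ζ ⬝ᵥ ((F * Y)ᴴ *ᵥ ζ) = star (star ζ ⬝ᵥ ((F * Y) *ᵥ ζ)) := by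
    rw [← cs, star_mulVec, dotProduct_mulVec]
  have e2 : star ζ ⬝ᵥ ((F * Y) *ᵥ ζ) = s * (star y ⬝ᵥ (Y *ᵥ y) - star w ⬝ᵥ z) := by
    rw [← e1, dotProduct_smul, smul_eq_mul, hζ, star_sub, sub_dotProduct, adj]
  have hYy := hY.posSemidef.dotProduct_mulVec_nonneg y
  rw [neg_mulVec, add_mulVec, add_mulVec, smul_mulVec, one_mulVec, dotProduct_neg, dotProduct_add,
    dotProduct_add, hg, e2, dotProduct_smul] at h1
  have h1' := (Complex.le_def.1 h1).1
  have hζn := (Complex.le_def.1 (dotProduct_star_self_nonneg (star ζ))).1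
  rw [star_star] at hζn
  have hYy' := Complex.le_def.1 hYy
  have h2 := (Complex.le_def.1 (hY.posSemidef.dotProduct_mulVec_nonneg (y - Cᴴ *ᵥ z))).1
  have e3 : star (y - Cᴴ *ᵥ z) ⬝ᵥ (Y *ᵥ (y - Cᴴ *ᵥ z)) = star y ⬝ᵥ (Y *ᵥ y) - 2 * (star z ⬝ᵥ z)
      + star z ⬝ᵥ ((C * Y * Cᴴ) *ᵥ z) := by
    have e4 : star y ⬝ᵥ (Y *ᵥ (Cᴴ *ᵥ z)) = star z ⬝ᵥ z := by
      rw [cs, star_mulVec, hYh, ← dotProduct_mulVec, adj, ← hzdef, ← cs]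
    rw [mulVec_sub, dotProduct_sub, star_sub, sub_dotProduct, sub_dotProduct, e4, adj, adj,
      ← hzdef, ← mulVec_mulVec, ← mulVec_mulVec]
    ring
  have h3 := (Complex.le_def.1 (hC.posSemidef.dotProduct_mulVec_nonneg z)).1
  have h3' : z ≠ 0 → _ := fun h => (Complex.lt_def.1 (hC.dotProduct_mulVec_pos h)).1
  rw [e3] at h2
  rw [sub_mulVec, one_mulVec, dotProduct_sub] at h3 h3'
  have hwz : (s * (star w ⬝ᵥ z)).re = (star s * (star z ⬝ᵥ w)).re := by
    rw [cs m w z]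
    simp
  have hζ0 : ζ = 0 := by
    by_contra hne
    have hpos := (Complex.lt_def.1 (dotProduct_star_self_pos_iff.2 (star_ne_zero.2 hne))).1
    rw [star_star, dotProduct_comm] at hpos
    have hmul := mul_pos hε hpos
    simp [mul_sub] at h1' h2 h3 hwz hw hYy' hmul
    rw [hYy'.2.symm] at *
    nlinarith [mul_nonneg hs h2, mul_nonneg hs (sub_nonneg.2 h3)]
  by_cases h0 : s = 0
  · have hwz' : (star w ⬝ᵥ z).re = (star z ⬝ᵥ w).re := by
      rw [cs m w z]
      simp
    have hy : y = Cᴴ *ᵥ w := sub_eq_zero.1 (hζ ▸ hζ0)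
    have e5 : star y ⬝ᵥ (Y *ᵥ y) = star w ⬝ᵥ z := by
      conv_lhs => rw [hy, adj, ← hy]
    have hz0 : z = 0 := by
      by_contra hne
      have := h3' hne
      have := hw0 h0
      rw [e5] at h2
      simp at h2 this h3
      simp at *
      linarith
    rw [hy, hz hz0]; simp
  · rw [hζ0, mulVec_zero] at e1
    exact (smul_eq_zero.1 e1).resolve_left h0

lemma hurwitz_res {q : ℕ} {A : Matrix (Fin q) (Fin q) ℝ} (hA : IsHurwitz A) (s : ℂ)
    (hs : 0 ≤ s.re) : s ∈ resolventSet ℂ (A.map Complex.ofReal) := by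
  by_contra h
  exact absurd (hA s h) (not_lt.mpr hs)

lemma res_eq {q : ℕ} (A : Matrix (Fin q) (Fin q) ℂ) (s : ℂ) :
    resolvent A s = (s • (1 : Matrix (Fin q) (Fin q) ℂ) - A)⁻¹ := by
  rw [resolvent, Matrix.nonsing_inv_eq_ringInverse, Algebra.algebraMap_eq_smul_one]

lemma tf_quad {q m : ℕ} (A : Matrix (Fin q) (Fin q) ℝ) (B : Matrix (Fin q) (Fin m) ℝ)
    (C : Matrix (Fin m) (Fin q) ℝ) (D : Matrix (Fin m) (Fin m) ℝ) (s : ℂ) (z : Fin m → ℂ) :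
    star z ⬝ᵥ (tf A B C D s *ᵥ z) =
      (star z ᵥ* C.map Complex.ofReal) ⬝ᵥ
        (resolvent (A.map Complex.ofReal) s *ᵥ (B.map Complex.ofReal *ᵥ z))
      + star z ⬝ᵥ (D.map Complex.ofReal *ᵥ z) := by
  rw [tf, res_eq, add_mulVec, dotProduct_add, ← mulVec_mulVec, ← mulVec_mulVec, dotProduct_mulVec]

lemma tf_conj {q m : ℕ} (A : Matrix (Fin q) (Fin q) ℝ) (B : Matrix (Fin q) (Fin m) ℝ)
    (C : Matrix (Fin m) (Fin q) ℝ) (D : Matrix (Fin m) (Fin m) ℝ) (s : ℂ) :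
    tf A B C D (star s) = (tf A B C D s)ᴴᵀ := by
  have h : ∀ {k l : ℕ} (X : Matrix (Fin k) (Fin l) ℝ),
      (X.map Complex.ofReal)ᴴᵀ = X.map Complex.ofReal := by
    intro k l X
    ext i j
    simp
  simp only [tf]
  rw [conjTranspose_add, transpose_add, h, conjTranspose_mul, transpose_mul, h, conjTranspose_mul,
    transpose_mul, h, conjTranspose_nonsing_inv, transpose_nonsing_inv, conjTranspose_sub,
    transpose_sub, h]
  simp

lemma tf_quad_conj {q m : ℕ} (A : Matrix (Fin q) (Fin q) ℝ) (B : Matrix (Fin q) (Fin m) ℝ)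
    (C : Matrix (Fin m) (Fin q) ℝ) (D : Matrix (Fin m) (Fin m) ℝ) (s : ℂ) (z : Fin m → ℂ) :
    star z ⬝ᵥ (tf A B C D (star s) *ᵥ z) =
      star (star (star z) ⬝ᵥ (tf A B C D s *ᵥ (star z))) := by
  rw [tf_conj, ← star_dotProduct_star, star_star, star_mulVec, star_star, mulVec_transpose,
    dotProduct_comm]

lemma sni_im_pos {q m : ℕ} {A : Matrix (Fin q) (Fin q) ℝ} {B : Matrix (Fin q) (Fin m) ℝ}
    {C : Matrix (Fin m) (Fin q) ℝ} {D : Matrix (Fin m) (Fin m) ℝ} (h : IsSNI A B C D)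
    (ω : ℝ) (hω : 0 < ω) (z : Fin m → ℂ) :
    (star z ⬝ᵥ (tf A B C D (Complex.I * ω) *ᵥ z)).im ≤ 0 := by
  have h1 := (Complex.le_def.1 ((h.2 ω hω).posSemidef.dotProduct_mulVec_nonneg z)).1
  have h2 : star z ⬝ᵥ ((tf A B C D (Complex.I * ω))ᴴ *ᵥ z)
      = star (star z ⬝ᵥ (tf A B C D (Complex.I * ω) *ᵥ z)) := by
    rw [← star_dotProduct_star, star_star, star_mulVec, dotProduct_comm, ← dotProduct_mulVec,
      dotProduct_comm]
  rw [smul_mulVec, dotProduct_smul, sub_mulVec, dotProduct_sub, h2] at h1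
  simp at h1
  linarith

lemma sni_im_neg {q m : ℕ} {A : Matrix (Fin q) (Fin q) ℝ} {B : Matrix (Fin q) (Fin m) ℝ}
    {C : Matrix (Fin m) (Fin q) ℝ} {D : Matrix (Fin m) (Fin m) ℝ} (h : IsSNI A B C D)
    (ω : ℝ) (hω : ω < 0) (z : Fin m → ℂ) :
    0 ≤ (star z ⬝ᵥ (tf A B C D (Complex.I * ω) *ᵥ z)).im := by
  have h1 := sni_im_pos h (-ω) (by linarith) (star z)
  have h2 : (Complex.I * ω) = star (Complex.I * ((-ω : ℝ) : ℂ)) := by simp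
  rw [h2, tf_quad_conj]
  simpa using h1

lemma sni_im_zero {q m : ℕ} {A : Matrix (Fin q) (Fin q) ℝ} {B : Matrix (Fin q) (Fin m) ℝ}
    {C : Matrix (Fin m) (Fin q) ℝ} {D : Matrix (Fin m) (Fin m) ℝ} (h : IsSNI A B C D)
    (z : Fin m → ℂ) : (star z ⬝ᵥ (tf A B C D 0 *ᵥ z)).im = 0 := by
  have hc : ContinuousAt (fun ω : ℝ => (star z ⬝ᵥ (tf A B C D (Complex.I * ω) *ᵥ z)).im) 0 := by
    simp only [tf_quad]
    have h1 := cont_res (A.map Complex.ofReal) (star z ᵥ* C.map Complex.ofReal)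
      (B.map Complex.ofReal *ᵥ z) (Complex.I * ((0 : ℝ) : ℂ)) (hurwitz_res h.1 _ (by simp))
    have h2 : ContinuousAt (fun ω : ℝ => Complex.I * (ω : ℂ)) 0 := by fun_prop
    have h3 := ContinuousAt.comp (f := fun ω : ℝ => Complex.I * (ω : ℂ)) h1 h2
    exact Complex.continuous_im.continuousAt.comp (h3.add continuousAt_const)
  have h0 : (star z ⬝ᵥ (tf A B C D (Complex.I * ((0 : ℝ) : ℂ)) *ᵥ z)).im
      = (star z ⬝ᵥ (tf A B C D 0 *ᵥ z)).im := by simp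
  rw [← h0]
  apply le_antisymm
  · refine le_of_tendsto (hc.tendsto.mono_left (nhdsWithin_le_nhds (s := Set.Ioi 0))) ?_
    filter_upwards [self_mem_nhdsWithin] with ω hω
    exact sni_im_pos h ω hω z
  · refine ge_of_tendsto (hc.tendsto.mono_left (nhdsWithin_le_nhds (s := Set.Iio 0))) ?_
    filter_upwards [self_mem_nhdsWithin] with ω hω
    exact sni_im_neg h ω hω z

lemma herm_of_im {m : ℕ} {N : Matrix (Fin m) (Fin m) ℂ}
    (h : ∀ z : Fin m → ℂ, (star z ⬝ᵥ (N *ᵥ z)).im = 0) : N.IsHermitian := by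
  rw [← Matrix.isSymmetric_toEuclideanLin_iff, LinearMap.isSymmetric_iff_inner_map_self_real]
  intro v
  rw [Complex.conj_eq_iff_im]
  have := h v.ofLp
  simp only [EuclideanSpace.inner_eq_star_dotProduct]
  rw [dotProduct_comm] at this
  rw [← neg_eq_zero, ← Complex.conj_im, ← this]
  congr 1
  rw [starRingEnd_apply, ← star_dotProduct_star]
  simp

lemma sni_dc {q m : ℕ} {A : Matrix (Fin q) (Fin q) ℝ} {B : Matrix (Fin q) (Fin m) ℝ}
    {C : Matrix (Fin m) (Fin q) ℝ} {D : Matrix (Fin m) (Fin m) ℝ} (h : IsSNI A B C D)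
    (he : ∀ μ ∈ eigs (D - C * A⁻¹ * B), μ.im = 0 ∧ -1 ≤ μ.re ∧ μ.re ≤ 1)
    (z : Fin m → ℂ) : (star z ⬝ᵥ (tf A B C D 0 *ᵥ z)).re ≤ (star z ⬝ᵥ z).re := by
  have hu : IsUnit A := by
    have h1 := hurwitz_res h.1 0 (by simp)
    rw [spectrum.mem_resolventSet_iff, map_zero, zero_sub, IsUnit.neg_iff,
      Matrix.isUnit_iff_isUnit_det] at h1
    have h2 : (A.map Complex.ofReal).det = Complex.ofReal A.det :=
      (RingHom.map_det Complex.ofRealHom A).symm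
    rw [h2, isUnit_iff_ne_zero] at h1
    rw [Matrix.isUnit_iff_isUnit_det, isUnit_iff_ne_zero]
    exact_mod_cast h1
  have hinv : (A.map Complex.ofReal)⁻¹ = A⁻¹.map Complex.ofReal := by
    apply Matrix.inv_eq_right_inv
    have : A.map Complex.ofReal * A⁻¹.map Complex.ofReal = (A * A⁻¹).map Complex.ofReal :=
      (Matrix.map_mul (f := Complex.ofRealHom)).symm
    rw [this, Matrix.mul_nonsing_inv _ ((Matrix.isUnit_iff_isUnit_det _).1 hu)]
    simp
  have htf : tf A B C D 0 = (D - C * A⁻¹ * B).map Complex.ofReal := by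
    have e1 : (0 • (1 : Matrix (Fin q) (Fin q) ℂ) - A.map Complex.ofReal)⁻¹
        = -(A⁻¹.map Complex.ofReal) := by
      rw [← hinv, zero_smul, zero_sub]
      apply Matrix.inv_eq_right_inv
      rw [neg_mul_neg, hinv]
      have : A.map Complex.ofReal * A⁻¹.map Complex.ofReal = (A * A⁻¹).map Complex.ofReal :=
        (Matrix.map_mul (f := Complex.ofRealHom)).symm
      rw [this, Matrix.mul_nonsing_inv _ ((Matrix.isUnit_iff_isUnit_det _).1 hu)]
      simp
    have e1' : ((0 : ℂ) • (1 : Matrix (Fin q) (Fin q) ℂ) - A.map Complex.ofReal)⁻¹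
        = -(A⁻¹.map Complex.ofReal) := by simpa using e1
    rw [tf, e1']
    ext i j
    simp [Matrix.mul_apply]
    ring
  have hN : (tf A B C D 0).IsHermitian := herm_of_im (sni_im_zero h)
  have hpsd : (1 - tf A B C D 0).PosSemidef := by
    rw [posSemidef_iff_isHermitian_and_spectrum_nonneg]
    refine ⟨isHermitian_one.sub hN, ?_⟩
    intro μ hμ
    have h1 : 1 - μ ∈ spectrum ℂ (tf A B C D 0) := by
      rw [spectrum.mem_iff] at hμ ⊢
      intro hc
      apply hμ
      rw [← IsUnit.neg_iff]
      convert hc using 1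
      rw [map_sub, map_one]
      abel
    rw [htf] at h1
    have h2 := he _ h1
    simp at h2
    show 0 ≤ μ
    rw [Complex.le_def]
    refine ⟨by simpa using h2.2.2, by simpa using h2.1.symm⟩
  have h3 := (Complex.le_def.1 (hpsd.dotProduct_mulVec_nonneg z)).1
  rw [sub_mulVec, one_mulVec, dotProduct_sub] at h3
  simpa using h3

lemma sni_bound {q m : ℕ} {A : Matrix (Fin q) (Fin q) ℝ} {B : Matrix (Fin q) (Fin m) ℝ}
    {C : Matrix (Fin m) (Fin q) ℝ} {D : Matrix (Fin m) (Fin m) ℝ} (h : IsSNI A B C D)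
    (he : ∀ μ ∈ eigs (D - C * A⁻¹ * B), μ.im = 0 ∧ -1 ≤ μ.re ∧ μ.re ≤ 1)
    (s : ℂ) (hs : 0 ≤ s.re)
    (z : Fin m → ℂ) :
    (star s * (star z ⬝ᵥ (tf A B C D s *ᵥ z))).re ≤ s.re * (star z ⬝ᵥ z).re := by
  set Ac := A.map Complex.ofReal with hAc
  have hdet : ∀ s : ℂ, 0 ≤ s.re → IsUnit (s • (1 : Matrix (Fin q) (Fin q) ℂ) - Ac).det := by
    intro s hs
    have := hurwitz_res h.1 s hs
    rw [spectrum.mem_resolventSet_iff, Algebra.algebraMap_eq_smul_one,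
      Matrix.isUnit_iff_isUnit_det] at this
    exact this
  have hid : ∀ s : ℂ, 0 ≤ s.re →
      resolvent Ac (0 : ℂ) - resolvent Ac s = s • (resolvent Ac (0 : ℂ) * resolvent Ac s) := by
    intro s hs
    rw [res_eq Ac (0 : ℂ), res_eq Ac s]
    have h0 := hdet 0 (by simp)
    have h1 := hdet s hs
    set X := ((0 : ℂ) • (1 : Matrix (Fin q) (Fin q) ℂ) - Ac) with hX
    set Z := (s • (1 : Matrix (Fin q) (Fin q) ℂ) - Ac) with hZ
    have hXZ : Z - X = s • (1 : Matrix (Fin q) (Fin q) ℂ) := by rw [hX, hZ]; simp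
    calc X⁻¹ - Z⁻¹ = X⁻¹ * (Z - X) * Z⁻¹ := by
          rw [mul_sub, sub_mul, mul_assoc, Matrix.mul_nonsing_inv _ h1,
            Matrix.nonsing_inv_mul _ h0, mul_one, one_mul]
      _ = _ := by rw [hXZ]; simp
  set k : ℂ → ℂ := fun s => ((star z ᵥ* C.map Complex.ofReal) ᵥ* resolvent Ac (0 : ℂ)) ⬝ᵥ
    (resolvent Ac s *ᵥ (B.map Complex.ofReal *ᵥ z)) with hk
  have hfk : ∀ s : ℂ, 0 ≤ s.re → star z ⬝ᵥ (tf A B C D 0 *ᵥ z) - star z ⬝ᵥ (tf A B C D s *ᵥ z)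
      = s * k s := by
    intro s hs
    rw [tf_quad, tf_quad, ← hAc, add_sub_add_right_eq_sub, ← dotProduct_sub, ← sub_mulVec, hid s hs,
      smul_mulVec, dotProduct_smul, ← mulVec_mulVec, dotProduct_mulVec, smul_eq_mul]
  have him0 := sni_im_zero h z
  have hkpos : 0 ≤ (k s).re := by
    refine pr_half_plane Ac h.1 _ _ ?_ s hs
    intro ω hω
    have e := hfk (ω * Complex.I) (by simp)
    change 0 ≤ (k (ω * Complex.I)).re
    have e' := congrArg Complex.im e
    rw [mul_comm (ω : ℂ) Complex.I] at e' ⊢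
    simp [him0] at e'
    rcases lt_or_gt_of_ne hω with h1 | h1
    · have := sni_im_neg h ω h1 z
      nlinarith
    · have := sni_im_pos h ω h1 z
      nlinarith
  have e := hfk s hs
  have e' : star z ⬝ᵥ (tf A B C D s *ᵥ z) = star z ⬝ᵥ (tf A B C D 0 *ᵥ z) - s * k s := by
    rw [← e]; ring
  have hdc := sni_dc h he z
  rw [e']
  simp [him0]
  nlinarith [mul_nonneg hs (sub_nonneg.2 hdc), mul_nonneg (mul_self_nonneg s.re) hkpos,
    mul_nonneg (mul_self_nonneg s.im) hkpos]

lemma offdiag_zero {n m : ℕ} {P : Matrix (Fin n) (Fin n) ℝ} {Q : Matrix (Fin n) (Fin m) ℝ}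
    {R : Matrix (Fin m) (Fin n) ℝ} (h : (-(Matrix.fromBlocks P Q R 0)).PosSemidef) : Q = 0 := by
  apply Matrix.ext_of_mulVec_single
  intro j
  have h1 := (h.dotProduct_mulVec_zero_iff (Sum.elim 0 (Pi.single j 1))).1 (by
    rw [neg_mulVec, fromBlocks_mulVec, dotProduct_neg, Sum.elim_comp_inl, Sum.elim_comp_inr]
    simp only [mulVec_zero, zero_mulVec, zero_add, dotProduct, Fintype.sum_sum_type]
    simp)
  rw [neg_mulVec, neg_eq_zero, fromBlocks_mulVec, Sum.elim_comp_inl, Sum.elim_comp_inr,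
    mulVec_zero, zero_add] at h1
  funext i
  have := congrFun h1 (Sum.inl i)
  rw [Sum.elim_inl] at this
  rw [this, zero_mulVec]
  rfl

/-- Robust state-feedback synthesis for NI systems. -/
theorem state_feedback_ni_synthesis {n m p : ℕ}
    (A : Matrix (Fin n) (Fin n) ℝ) (B₁ : Matrix (Fin n) (Fin m) ℝ)
    (B₂ : Matrix (Fin n) (Fin p) ℝ) (C₁ : Matrix (Fin m) (Fin n) ℝ)
    (Y : Matrix (Fin n) (Fin n) ℝ) (M : Matrix (Fin p) (Fin n) ℝ) (ε : ℝ)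
    (hY : Y.PosDef) (hε : 0 < ε)
    (hlmi : (-(Matrix.fromBlocks
        (A * Y + Y * Aᵀ + B₂ * M + Mᵀ * B₂ᵀ + ε • (1 : Matrix (Fin n) (Fin n) ℝ))
        (B₁ + A * Y * C₁ᵀ + B₂ * M * C₁ᵀ)
        (B₁ᵀ + C₁ * Y * Aᵀ + C₁ * Mᵀ * B₂ᵀ)
        (0 : Matrix (Fin m) (Fin m) ℝ))).PosSemidef)
    (hdc : (-(C₁ * Y * C₁ᵀ - 1)).PosDef) :
    ∀ (q : ℕ) (AΔ : Matrix (Fin q) (Fin q) ℝ) (BΔ : Matrix (Fin q) (Fin m) ℝ)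
      (CΔ : Matrix (Fin m) (Fin q) ℝ) (DΔ : Matrix (Fin m) (Fin m) ℝ),
      IsMinimal AΔ BΔ CΔ → IsSNI AΔ BΔ CΔ DΔ → DΔ.PosSemidef →
      (∀ μ ∈ eigs (DΔ - CΔ * AΔ⁻¹ * BΔ), μ.im = 0 ∧ -1 ≤ μ.re ∧ μ.re ≤ 1) →
      IsHurwitz (Matrix.fromBlocks
        (A + B₂ * (M * Y⁻¹) + B₁ * DΔ * C₁) (B₁ * CΔ) (BΔ * C₁) AΔ) := by
  
  intro q AΔ BΔ CΔ DΔ _ hS hD he μ hμ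
  by_contra hre
  rw [not_lt] at hre
  -- real data
  set F := A + B₂ * (M * Y⁻¹) with hF
  have hYu : IsUnit Y.det := (Matrix.isUnit_iff_isUnit_det _).1 hY.isUnit
  have hFY : F * Y = A * Y + B₂ * M := by
    rw [hF, Matrix.add_mul, Matrix.mul_assoc, Matrix.mul_assoc, Matrix.nonsing_inv_mul _ hYu, Matrix.mul_one]
  have hYt : Yᵀ = Y := by
    have h1 := hY.isHermitian
    rwa [Matrix.IsHermitian, conjTranspose_eq_transpose_of_trivial] at h1
  have hB1 : B₁ = -(F * Y * C₁ᵀ) := by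
    have := offdiag_zero hlmi
    rw [hFY, Matrix.add_mul, eq_neg_iff_add_eq_zero, ← this, add_assoc]
  have hLr : (-(F * Y + (F * Y)ᵀ + ε • (1 : Matrix (Fin n) (Fin n) ℝ))).PosSemidef := by
    have h1 := hlmi.submatrix Sum.inl
    convert h1 using 1
    rw [hFY, transpose_add, transpose_mul, transpose_mul, hYt]
    ext i j
    simp
    ring
  -- complexification
  have mm : ∀ {a b c : ℕ} (X : Matrix (Fin a) (Fin b) ℝ) (Z : Matrix (Fin b) (Fin c) ℝ),
      (X * Z).map Complex.ofReal = X.map Complex.ofReal * Z.map Complex.ofReal :=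
    fun X Z => Matrix.map_mul (f := Complex.ofRealHom)
  have mt : ∀ {a b : ℕ} (X : Matrix (Fin a) (Fin b) ℝ),
      (Xᵀ).map Complex.ofReal = (X.map Complex.ofReal)ᴴ := by
    intro a b X
    ext i j
    simp
  have hLc := map_psd hLr
  have hCc := map_pd hdc
  have hYc := map_pd hY
  have e1 : (-(F * Y + (F * Y)ᵀ + ε • (1 : Matrix (Fin n) (Fin n) ℝ))).map Complex.ofReal
      = -(F.map Complex.ofReal * Y.map Complex.ofReal
        + (F.map Complex.ofReal * Y.map Complex.ofReal)ᴴ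
        + (ε : ℂ) • (1 : Matrix (Fin n) (Fin n) ℂ)) := by
    rw [← mm, ← mt]
    ext i j
    by_cases hij : i = j <;> simp [hij]
  have e2 : (-(C₁ * Y * C₁ᵀ - 1)).map Complex.ofReal
      = 1 - C₁.map Complex.ofReal * Y.map Complex.ofReal * (C₁.map Complex.ofReal)ᴴ := by
    rw [← mt, ← mm, ← mm]
    ext i j
    by_cases hij : i = j <;> simp [hij]
  rw [e1] at hLc
  rw [e2] at hCc
  have hB1c : B₁.map Complex.ofReal
      = -(F.map Complex.ofReal * Y.map Complex.ofReal * (C₁.map Complex.ofReal)ᴴ) := by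
    rw [← mt, ← mm, ← mm, hB1]
    ext i j
    simp
  -- eigenvector
  rw [eigs, spectrum.mem_iff, Algebra.algebraMap_eq_smul_one, Matrix.isUnit_iff_isUnit_det,
    isUnit_iff_ne_zero, not_not, ← Matrix.exists_mulVec_eq_zero_iff] at hμ
  obtain ⟨v, hv0, hv⟩ := hμ
  rw [sub_mulVec, smul_mulVec, one_mulVec, sub_eq_zero, fromBlocks_map, fromBlocks_mulVec] at hv
  set x := v ∘ Sum.inl with hx
  set ξ := v ∘ Sum.inr with hξ
  have hv1 : μ • x = (F + B₁ * DΔ * C₁).map Complex.ofReal *ᵥ x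
      + (B₁ * CΔ).map Complex.ofReal *ᵥ ξ := by
    funext i
    exact congrFun hv (Sum.inl i)
  have hv2 : μ • ξ = (BΔ * C₁).map Complex.ofReal *ᵥ x + AΔ.map Complex.ofReal *ᵥ ξ := by
    funext i
    exact congrFun hv (Sum.inr i)
  set z := C₁.map Complex.ofReal *ᵥ x with hz
  set w := tf AΔ BΔ CΔ DΔ μ *ᵥ z with hw
  have hdet : IsUnit (μ • (1 : Matrix (Fin q) (Fin q) ℂ) - AΔ.map Complex.ofReal).det := by
    have := hurwitz_res hS.1 μ hre
    rw [spectrum.mem_resolventSet_iff, Algebra.algebraMap_eq_smul_one,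
      Matrix.isUnit_iff_isUnit_det] at this
    exact this
  have hξe : ξ = (μ • (1 : Matrix (Fin q) (Fin q) ℂ) - AΔ.map Complex.ofReal)⁻¹ *ᵥ
      (BΔ.map Complex.ofReal *ᵥ z) := by
    have h1 : (μ • (1 : Matrix (Fin q) (Fin q) ℂ) - AΔ.map Complex.ofReal) *ᵥ ξ
        = BΔ.map Complex.ofReal *ᵥ z := by
      rw [sub_mulVec, smul_mulVec, one_mulVec, hv2, hz, mulVec_mulVec, mm]
      abel
    rw [← h1, mulVec_mulVec, Matrix.nonsing_inv_mul _ hdet, one_mulVec]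
  have hwe : w = CΔ.map Complex.ofReal *ᵥ ξ + DΔ.map Complex.ofReal *ᵥ z := by
    rw [hw, tf, add_mulVec, ← mulVec_mulVec, ← mulVec_mulVec, ← hξe]
  have hxe : μ • x = F.map Complex.ofReal *ᵥ x
      - (F.map Complex.ofReal * Y.map Complex.ofReal * (C₁.map Complex.ofReal)ᴴ) *ᵥ w := by
    have h1 : (F + B₁ * DΔ * C₁).map Complex.ofReal
        = F.map Complex.ofReal + (B₁ * DΔ * C₁).map Complex.ofReal := by
      ext i j
      simp
    rw [hv1, sub_eq_add_neg, ← neg_mulVec, ← hB1c, h1, add_mulVec, hwe, mulVec_add, mm, mm, mm,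
      hz, mulVec_mulVec, mulVec_mulVec, mulVec_mulVec]
    abel
  have hx0 : x = 0 := by
    refine core (F.map Complex.ofReal) (Y.map Complex.ofReal) (C₁.map Complex.ofReal) ε hε hYc hLc
      hCc μ hre x w hxe (sni_bound hS he μ hre z) ?_ ?_
    · intro h0
      rw [← hz, hw, h0]
      exact sni_dc hS he z
    · intro h0
      rw [← hz] at h0
      rw [hw, h0, mulVec_zero]
  have hξ0 : ξ = 0 := by
    rw [hξe, hz, hx0]
    simp
  apply hv0
  funext i
  cases i with
  | inl i => exact congrFun hx0 i
  | inr i => exact congrFun hξ0 i
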